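/- arXiv:1001.4566 — 5 statements merged into one kernel-verified Lean document; each statement's English description precedes it below -/
import Mathlib

section
/- Suppose ν is a ℤ^d-valuation on K trivial on k, and ν(g) ∈ ℕ^d for every m ≥ 0 and every g ∈ V^m∖{0}, so that Γ ⊆ ℕ×ℕ^d. Let Cone(Γ) ⊆ ℝ×ℝ^d be the closure of the convex hull of the image of Γ, and define the Okounkov body Δ(V) = {x ∈ ℝ^d : (1,x) ∈ Cone(Γ)}. If Δ(V) equals the convex hull in ℝ^d of the finite set ν(V∖{0}) ⊆ ℕ^d, then the monoid Γ is finitely generated. -/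
instance (d : ℕ) : WellFoundedLT (Fin d) := Finite.to_wellFoundedLT

/-- The valuation semigroup `Γ_ν(V) = {(m, ν g) : g ∈ V^m \ {0}}`. -/
def valSemigroup {k K : Type*} [Field k] [Field K] [Algebra k K] {d : ℕ}
    (ν : K → Lex (Fin d → ℤ)) (V : Submodule k K) : Set (ℕ × Lex (Fin d → ℤ)) :=
  {p | ∃ g ∈ V ^ p.1, g ≠ 0 ∧ ν g = p.2}

/-- The natural embedding of `ℕ × ℤ^d` into `ℝ × ℝ^d`. -/
def embGamma {d : ℕ} (p : ℕ × Lex (Fin d → ℤ)) : ℝ × (Fin d → ℝ) :=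
  ((p.1 : ℝ), fun i => (ofLex p.2 i : ℝ))

/-- The natural embedding of `ℤ^d` into `ℝ^d`. -/
def embZd {d : ℕ} (u : Lex (Fin d → ℤ)) : Fin d → ℝ :=
  fun i => (ofLex u i : ℝ)

/-- `Cone(Γ)`: the closure of the convex hull of (the image in `ℝ × ℝ^d` of) `Γ`. -/
def coneGamma {k K : Type*} [Field k] [Field K] [Algebra k K] {d : ℕ}
    (ν : K → Lex (Fin d → ℤ)) (V : Submodule k K) : Set (ℝ × (Fin d → ℝ)) :=
  closure (convexHull ℝ (embGamma '' valSemigroup ν V))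

/-- The Okounkov body `Δ(V) = Cone(Γ) ∩ ({1} × ℝ^d)`. -/
def okounkovBody {k K : Type*} [Field k] [Field K] [Algebra k K] {d : ℕ}
    (ν : K → Lex (Fin d → ℤ)) (V : Submodule k K) : Set (Fin d → ℝ) :=
  {x | ((1 : ℝ), x) ∈ coneGamma ν V}

/-!
Gordan's argument. An element of the real cone over a finite set `T` is the sum of a point of the
zonotope `∑ t, [0, 1] • t` and of a natural combination of `T`: take integer parts of the
coefficients. Hence a submonoid `Γ` of a lattice with `T ⊆ Γ ⊆ cone T` lies in `F + ⟨T⟩`, where `F`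
is the finite set of lattice points of a ball. For each `f ∈ F` the exponents `n` with
`f + ∑ t, n t • t ∈ Γ` form an upper set of `ℕ ^ T`, which by Dickson's lemma has finitely many
minimal elements; together with `T` these generate `Γ`.

For the valuation semigroup take `T = {1} × ν(V ∖ {0})`, which is finite because the filtration of
`V` by `{f | u ≤ ν f}` jumps at every value of `ν`. If `(m, u) ∈ Γ` and `m > 0`, then `u / m` lies
in the Okounkov body, hence by hypothesis in the convex hull of `ν(V ∖ {0})`, so that `(m, u)` lies
in the cone over `T`; and `m = 0` forces `u = 0`.
-/

section Submonoids

open scoped Pointwise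

theorem exists_finite_subset_forall_exists_le {α : Type*} [PartialOrder α] [WellQuasiOrderedLE α]
    (s : Set α) : ∃ t ⊆ s, t.Finite ∧ ∀ a ∈ s, ∃ b ∈ t, b ≤ a := by
  refine ⟨{a | Minimal (· ∈ s) a}, fun a ha => ha.prop,
    WellQuasiOrderedLE.finite_of_isAntichain (setOfPred_minimal_antichain _), fun a ha => ?_⟩
  obtain ⟨b, hba, hb⟩ := exists_minimal_le_of_wellFoundedLT (· ∈ s) a ha
  exact ⟨b, hb, hba⟩

theorem fg_of_subset_finite_add {M : Type*} [AddCommMonoid M] {N Γ : AddSubmonoid M} (hN : N.FG)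
    (hNΓ : N ≤ Γ) {F : Set M} (hF : F.Finite) (hΓ : (Γ : Set M) ⊆ F + N) : Γ.FG := by
  obtain ⟨S, rfl⟩ := hN
  let comb (n : S → ℕ) : M := ∑ s, n s • s.1
  have comb_add (n n' : S → ℕ) : comb (n + n') = comb n + comb n' := by
    simp only [comb, Pi.add_apply, add_smul, Finset.sum_add_distrib]
  have comb_mem (n : S → ℕ) : comb n ∈ AddSubmonoid.closure (S : Set M) :=
    AddSubmonoid.mem_closure_finset'.2 ⟨n, rfl⟩
  choose B hBΓ hBfin hBle using
    fun f => exists_finite_subset_forall_exists_le {n | f + comb n ∈ Γ}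
  let gens : Set M := S ∪ ⋃ f ∈ F, (f + comb ·) '' B f
  have gens_subset : gens ⊆ Γ :=
    Set.union_subset (AddSubmonoid.subset_closure.trans hNΓ)
      (Set.iUnion₂_subset fun f _ => Set.image_subset_iff.2 (hBΓ f))
  have gens_finite : gens.Finite :=
    S.finite_toSet.union (hF.biUnion fun f _ => (hBfin f).image _)
  refine (AddSubmonoid.fg_iff Γ).2 ⟨gens, le_antisymm (AddSubmonoid.closure_le.2 gens_subset) ?_,
    gens_finite⟩
  intro x hx
  obtain ⟨f, hf, y, hy, rfl⟩ := hΓ hx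
  obtain ⟨n, rfl⟩ := AddSubmonoid.mem_closure_finset'.1 hy
  obtain ⟨b, hb, hbn⟩ := hBle f n hx
  have split : f + comb n = f + comb b + comb (n - b) := by
    rw [add_assoc, ← comb_add, add_tsub_cancel_of_le hbn]
  change f + comb n ∈ _
  rw [split]
  refine add_mem (AddSubmonoid.subset_closure (Or.inr ?_))
    (AddSubmonoid.closure_mono Set.subset_union_left (comb_mem _))
  exact Set.mem_biUnion hf ⟨b, hb, rfl⟩

theorem coe_hull_subset_closedBall_add_closure {E : Type*} [SeminormedAddCommGroup E]
    [NormedSpace ℝ E] (T : Finset E) :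
    (PointedCone.hull ℝ (T : Set E) : Set E) ⊆
      Metric.closedBall 0 (∑ t ∈ T, ‖t‖) + (AddSubmonoid.closure (T : Set E) : Set E) := by
  intro x hx
  obtain ⟨c, -, rfl⟩ := Submodule.mem_span_finset.1 hx
  refine ⟨∑ t ∈ T, Int.fract (c t : ℝ) • t, ?_, ∑ t ∈ T, ⌊(c t : ℝ)⌋₊ • t, ?_, ?_⟩
  · refine mem_closedBall_zero_iff.2 (norm_sum_le_of_le T fun t _ => ?_)
    rw [norm_smul, Real.norm_of_nonneg (Int.fract_nonneg _)]
    exact mul_le_of_le_one_left (norm_nonneg t) (Int.fract_lt_one _).le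
  · exact sum_mem fun t ht => nsmul_mem (AddSubmonoid.subset_closure ht) _
  · change _ + _ = _
    rw [← Finset.sum_add_distrib]
    refine Finset.sum_congr rfl fun t _ => ?_
    rw [← Nat.cast_smul_eq_nsmul ℝ, ← add_smul, natCast_floor_eq_intCast_floor (c t).2,
      Int.fract_add_floor]
    rfl

theorem fg_of_subset_hull {E : Type*} [NormedAddCommGroup E] [NormedSpace ℝ E] [ProperSpace E]
    {L : AddSubgroup E} [DiscreteTopology L] {Γ : AddSubmonoid E} (hΓL : (Γ : Set E) ⊆ L)
    {T : Set E} (hT : T.Finite) (hTΓ : T ⊆ Γ) (hΓT : (Γ : Set E) ⊆ PointedCone.hull ℝ T) :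
    Γ.FG := by
  lift T to Finset E using hT
  have hle : AddSubmonoid.closure (T : Set E) ≤ Γ := AddSubmonoid.closure_le.2 hTΓ
  have hfin : (Metric.closedBall 0 (∑ t ∈ T, ‖t‖) ∩ (L : Set E)).Finite :=
    Metric.finite_isBounded_inter_isClosed DiscreteTopology.isDiscrete
      Metric.isBounded_closedBall inferInstance
  refine fg_of_subset_finite_add ⟨T, rfl⟩ hle hfin fun x hx => ?_
  obtain ⟨r, hr, n, hn, rfl⟩ := coe_hull_subset_closedBall_add_closure T (hΓT hx)
  have hrL : r ∈ L := (L.add_mem_cancel_right (hΓL (hle hn))).1 (hΓL hx)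
  exact Set.add_mem_add ⟨hr, hrL⟩ hn

end Submonoids

theorem singleton_prod_convexHull_subset_hull {𝕜 E F : Type*} [Field 𝕜] [LinearOrder 𝕜]
    [IsStrictOrderedRing 𝕜] [AddCommGroup E] [Module 𝕜 E] [AddCommGroup F] [Module 𝕜 F] (x : E)
    (s : Set F) :
    {x} ×ˢ convexHull 𝕜 s ⊆ (PointedCone.hull 𝕜 ({x} ×ˢ s) : Set (E × F)) := by
  have hprod : convexHull 𝕜 ({x} ×ˢ s) = {x} ×ˢ convexHull 𝕜 s := by
    rw [convexHull_prod, convexHull_singleton]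
  exact hprod ▸ convexHull_min PointedCone.subset_hull (PointedCone.convex _)

section Superlevel

variable {R M α : Type*} [Semiring R] [AddCommMonoid M] [Module R M] [LinearOrder α]

/-- The step `{f | u ≤ ν f}` of the filtration of a module by a function `ν` with the additive
properties of a valuation. The value `ν 0` is irrelevant: `0` belongs to every step. -/
def superlevel (ν : M → α)
    (hadd : ∀ f g : M, f ≠ 0 → g ≠ 0 → f + g ≠ 0 → min (ν f) (ν g) ≤ ν (f + g))
    (hsmul : ∀ (c : R) (f : M), c • f ≠ 0 → ν f ≤ ν (c • f)) (u : α) : Submodule R M where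
  carrier := {f | f ≠ 0 → u ≤ ν f}
  zero_mem' h := absurd rfl h
  add_mem' {f g} hf hg hfg := by
    rcases eq_or_ne f 0 with rfl | hf0
    · simpa using hg (by simpa using hfg)
    rcases eq_or_ne g 0 with rfl | hg0
    · simpa using hf hf0
    exact (le_min (hf hf0) (hg hg0)).trans (hadd f g hf0 hg0 hfg)
  smul_mem' c f hf hcf := (hf (right_ne_zero_of_smul hcf)).trans (hsmul c f hcf)

theorem superlevel_lt_superlevel {ν : M → α}
    (hadd : ∀ f g : M, f ≠ 0 → g ≠ 0 → f + g ≠ 0 → min (ν f) (ν g) ≤ ν (f + g))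
    (hsmul : ∀ (c : R) (f : M), c • f ≠ 0 → ν f ≤ ν (c • f)) {g : M} (hg : g ≠ 0) {v : α}
    (hv : ν g < v) : superlevel ν hadd hsmul v < superlevel ν hadd hsmul (ν g) :=
  SetLike.lt_iff_le_and_exists.2
    ⟨fun _ hf hf0 => hv.le.trans (hf hf0), g, fun _ => le_rfl, fun h => hv.not_ge (h hg)⟩

theorem finite_image_compl_zero [IsNoetherian R M] [IsArtinian R M] {ν : M → α}
    (hadd : ∀ f g : M, f ≠ 0 → g ≠ 0 → f + g ≠ 0 → min (ν f) (ν g) ≤ ν (f + g))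
    (hsmul : ∀ (c : R) (f : M), c • f ≠ 0 → ν f ≤ ν (c • f)) : (ν '' {0}ᶜ).Finite := by
  have anti : StrictAnti fun u : ν '' {0}ᶜ => superlevel ν hadd hsmul u.1 := by
    rintro ⟨_, g, hg, rfl⟩ v hv
    exact superlevel_lt_superlevel hadd hsmul hg hv
  have := anti.wellFoundedLT
  have := anti.wellFoundedGT
  exact Set.finite_coe_iff.1 (Finite.of_wellFoundedLT_wellFoundedGT (ν '' {0}ᶜ))

end Superlevel

theorem map_smul_of_map_mul {R K α : Type*} [CommSemiring R] [Semiring K] [Algebra R K]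
    [AddZeroClass α] {ν : K → α} (hmul : ∀ f g : K, f ≠ 0 → g ≠ 0 → ν (f * g) = ν f + ν g)
    (htriv : ∀ c : R, c ≠ 0 → ν (algebraMap R K c) = 0) {c : R} {f : K} (hcf : c • f ≠ 0) :
    ν (c • f) = ν f := by
  have hprod : algebraMap R K c * f ≠ 0 := by rwa [← Algebra.smul_def]
  rw [Algebra.smul_def, hmul _ _ (left_ne_zero_of_mul hprod) (right_ne_zero_of_mul hprod),
    htriv c (left_ne_zero_of_smul hcf), zero_add]

theorem finite_image_diff_zero {R K α : Type*} [CommSemiring R] [Semiring K] [Algebra R K]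
    [AddZeroClass α] [LinearOrder α] {ν : K → α} {V : Submodule R K} [IsNoetherian R V]
    [IsArtinian R V]
    (hadd : ∀ f g : K, f ≠ 0 → g ≠ 0 → f + g ≠ 0 → min (ν f) (ν g) ≤ ν (f + g))
    (hmul : ∀ f g : K, f ≠ 0 → g ≠ 0 → ν (f * g) = ν f + ν g)
    (htriv : ∀ c : R, c ≠ 0 → ν (algebraMap R K c) = 0) : (ν '' ((V : Set K) \ {0})).Finite := by
  have hfin : ((fun f : V => ν f) '' {0}ᶜ).Finite := by
    refine finite_image_compl_zero (R := R) (fun f g hf hg hfg => ?_) fun c f hcf => ?_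
    · exact hadd f g (by simpa using hf) (by simpa using hg) fun h => hfg (Subtype.ext h)
    · exact (map_smul_of_map_mul hmul htriv fun h => hcf (Subtype.ext h)).ge
  refine hfin.subset ?_
  rintro _ ⟨f, ⟨hfV, hf0⟩, rfl⟩
  exact ⟨⟨f, hfV⟩, by simpa using hf0, rfl⟩

/-- The embedding of `ℕ × ℤ^d` into `ℝ × ℝ^d` as a homomorphism of monoids. -/
def embGammaHom (d : ℕ) : ℕ × Lex (Fin d → ℤ) →+ ℝ × (Fin d → ℝ) where
  toFun := embGamma
  map_zero' := Prod.ext Nat.cast_zero (funext fun _ => Int.cast_zero)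
  map_add' _ _ := Prod.ext (Nat.cast_add _ _) (funext fun _ => Int.cast_add _ _)

theorem embGammaHom_injective (d : ℕ) : Function.Injective (embGammaHom d) := by
  rintro ⟨m, u⟩ ⟨n, v⟩ h
  obtain ⟨hmn, huv⟩ := Prod.ext_iff.1 h
  exact Prod.ext (Nat.cast_injective hmn) (funext fun i => Int.cast_injective (congrFun huv i))

theorem exists_discrete_addSubgroup_range_embGammaHom_subset (d : ℕ) :
    ∃ L : AddSubgroup (ℝ × (Fin d → ℝ)),
      DiscreteTopology L ∧ Set.range (embGammaHom d) ⊆ L := by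
  let b := (Module.Basis.singleton Unit ℝ).prod (Pi.basisFun ℝ (Fin d))
  refine ⟨(Submodule.span ℤ (Set.range b)).toAddSubgroup, inferInstance, ?_⟩
  rintro _ ⟨⟨m, u⟩, rfl⟩
  refine (b.mem_span_iff_repr_mem ℤ _).2 ?_
  rintro (_ | i)
  · exact ⟨m, by simp [b, embGammaHom, embGamma]⟩
  · exact ⟨ofLex u i, by simp [b, embGammaHom, embGamma]⟩

section ValuationSemigroup

variable {k K : Type*} [Field k] [Field K] [Algebra k K] {d : ℕ} {ν : K → Lex (Fin d → ℤ)}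
  {V : Submodule k K}

/-- The valuation semigroup as a submonoid of `ℕ × ℤ^d`. -/
def valSubmonoid (ν : K → Lex (Fin d → ℤ)) (V : Submodule k K)
    (hmul : ∀ f g : K, f ≠ 0 → g ≠ 0 → ν (f * g) = ν f + ν g) :
    AddSubmonoid (ℕ × Lex (Fin d → ℤ)) where
  carrier := valSemigroup ν V
  zero_mem' := by
    refine ⟨1, by simp, one_ne_zero, ?_⟩
    simpa using hmul 1 1 one_ne_zero one_ne_zero
  add_mem' := by
    rintro ⟨m, _⟩ ⟨n, _⟩ ⟨f, hf, hf0, rfl⟩ ⟨g, hg, hg0, rfl⟩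
    refine ⟨f * g, ?_, mul_ne_zero hf0 hg0, hmul f g hf0 hg0⟩
    exact (pow_add V m n).symm ▸ Submodule.mul_mem_mul hf hg

theorem eq_zero_of_zero_mem_valSemigroup (htriv : ∀ c : k, c ≠ 0 → ν (algebraMap k K c) = 0)
    {u : Lex (Fin d → ℤ)} (hu : (0, u) ∈ valSemigroup ν V) : u = 0 := by
  obtain ⟨g, hg, hg0, rfl⟩ := hu
  obtain ⟨c, rfl⟩ := Submodule.mem_one.1 ((pow_zero V).le hg)
  exact htriv c (by rintro rfl; simp at hg0)

theorem inv_smul_embZd_mem_okounkovBody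
    (hmul : ∀ f g : K, f ≠ 0 → g ≠ 0 → ν (f * g) = ν f + ν g) {m : ℕ} {u : Lex (Fin d → ℤ)}
    (hm : m ≠ 0) (hu : (m, u) ∈ valSemigroup ν V) :
    (m : ℝ)⁻¹ • embZd u ∈ okounkovBody ν V := by
  have hzero : (0 : ℝ × (Fin d → ℝ)) ∈ convexHull ℝ (embGamma '' valSemigroup ν V) :=
    subset_convexHull ℝ _ ⟨0, (valSubmonoid ν V hmul).zero_mem, (embGammaHom d).map_zero⟩
  have hscaled : (m : ℝ)⁻¹ • embGamma (m, u) ∈ convexHull ℝ (embGamma '' valSemigroup ν V) :=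
    (convex_convexHull ℝ _).smul_mem_of_zero_mem hzero (subset_convexHull ℝ _ ⟨_, hu, rfl⟩)
      ⟨by positivity, Nat.cast_inv_le_one m⟩
  have hone : (m : ℝ)⁻¹ • embGamma (m, u) = (1, (m : ℝ)⁻¹ • embZd u) :=
    Prod.ext (inv_mul_cancel₀ (Nat.cast_ne_zero.2 hm)) rfl
  exact subset_closure (hone ▸ hscaled)

theorem embGamma_image_valSemigroup_subset_hull
    (hmul : ∀ f g : K, f ≠ 0 → g ≠ 0 → ν (f * g) = ν f + ν g)
    (htriv : ∀ c : k, c ≠ 0 → ν (algebraMap k K c) = 0) {s : Set (Fin d → ℝ)}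
    (hΔ : okounkovBody ν V ⊆ convexHull ℝ s) :
    embGamma '' valSemigroup ν V ⊆ (PointedCone.hull ℝ ({(1 : ℝ)} ×ˢ s) : Set _) := by
  rintro _ ⟨⟨m, u⟩, hu, rfl⟩
  rcases eq_or_ne m 0 with rfl | hm
  · obtain rfl := eq_zero_of_zero_mem_valSemigroup htriv hu
    have hzero : embGamma (0, 0) = (0 : ℝ × (Fin d → ℝ)) := (embGammaHom d).map_zero
    exact hzero ▸ zero_mem (PointedCone.hull ℝ _)
  · have hmem : ((1 : ℝ), (m : ℝ)⁻¹ • embZd u) ∈ PointedCone.hull ℝ ({(1 : ℝ)} ×ˢ s) :=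
      singleton_prod_convexHull_subset_hull 1 s
        ⟨rfl, hΔ (inv_smul_embZd_mem_okounkovBody hmul hm hu)⟩
    have hscale : embGamma (m, u) = (m : ℝ) • ((1 : ℝ), (m : ℝ)⁻¹ • embZd u) :=
      Prod.ext (mul_one _).symm (smul_inv_smul₀ (Nat.cast_ne_zero.2 hm) _).symm
    exact hscale ▸ PointedCone.smul_mem _ m.cast_nonneg hmem

theorem singleton_prod_embZd_image_subset :
    {1} ×ˢ (embZd '' (ν '' ((V : Set K) \ {0}))) ⊆ embGamma '' valSemigroup ν V := by
  rintro ⟨_, _⟩ ⟨rfl, _, ⟨g, ⟨hgV, hg0⟩, rfl⟩, rfl⟩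
  exact ⟨(1, ν g), ⟨g, (pow_one V).ge hgV, hg0, rfl⟩, Prod.ext Nat.cast_one rfl⟩

theorem valSubmonoid_fg (hmul : ∀ f g : K, f ≠ 0 → g ≠ 0 → ν (f * g) = ν f + ν g)
    (htriv : ∀ c : k, c ≠ 0 → ν (algebraMap k K c) = 0)
    (hfin : (ν '' ((V : Set K) \ {0})).Finite)
    (hΔ : okounkovBody ν V ⊆ convexHull ℝ (embZd '' (ν '' ((V : Set K) \ {0})))) :
    (valSubmonoid ν V hmul).FG := by
  obtain ⟨L, _, hL⟩ := exists_discrete_addSubgroup_range_embGammaHom_subset d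
  refine AddSubmonoid.FG.map_injective (embGammaHom d) (embGammaHom_injective d) ?_
  exact fg_of_subset_hull ((Set.image_subset_range _ _).trans hL)
    ((Set.finite_singleton 1).prod (hfin.image embZd)) singleton_prod_embZd_image_subset
    (embGamma_image_valSemigroup_subset_hull hmul htriv hΔ)

end ValuationSemigroup

theorem finitely_generated_of_okounkov_body_eq_convexHull_general
    {k K : Type*} [Field k] [Field K] [Algebra k K] {d : ℕ}
    (ν : K → Lex (Fin d → ℤ)) (V : Submodule k K) (hVfd : FiniteDimensional k ↥V)
    (hadd : ∀ f g : K, f ≠ 0 → g ≠ 0 → f + g ≠ 0 → min (ν f) (ν g) ≤ ν (f + g))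
    (hmul : ∀ f g : K, f ≠ 0 → g ≠ 0 → ν (f * g) = ν f + ν g)
    (htriv : ∀ c : k, c ≠ 0 → ν (algebraMap k K c) = 0)
    (hΔ : okounkovBody ν V ⊆ convexHull ℝ (embZd '' (ν '' ((V : Set K) \ {0})))) :
    ∃ S : Finset (ℕ × Lex (Fin d → ℤ)),
      (S : Set (ℕ × Lex (Fin d → ℤ))) ⊆ valSemigroup ν V ∧
      ∀ x ∈ valSemigroup ν V, x ∈ AddSubmonoid.closure (S : Set (ℕ × Lex (Fin d → ℤ))) := by
  obtain ⟨S, hS⟩ :=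
    valSubmonoid_fg hmul htriv (finite_image_diff_zero hadd hmul htriv) hΔ
  exact ⟨S, AddSubmonoid.closure_le.1 hS.le, hS.ge⟩

theorem finitely_generated_of_okounkov_body_eq_convexHull
    {k K : Type*} [Field k] [Field K] [Algebra k K] {d : ℕ}
    (ν : K → Lex (Fin d → ℤ)) (V : Submodule k K)
    (hVne : V ≠ ⊥) (hVfd : FiniteDimensional k ↥V)
    (hadd : ∀ f g : K, f ≠ 0 → g ≠ 0 → f + g ≠ 0 → min (ν f) (ν g) ≤ ν (f + g))
    (hmul : ∀ f g : K, f ≠ 0 → g ≠ 0 → ν (f * g) = ν f + ν g)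
    (htriv : ∀ c : k, c ≠ 0 → ν (algebraMap k K c) = 0)
    (hnat : ∀ (m : ℕ), ∀ g ∈ V ^ m, g ≠ 0 → ∀ i : Fin d, 0 ≤ ofLex (ν g) i)
    (hΔ : okounkovBody ν V = convexHull ℝ (embZd '' (ν '' ((V : Set K) \ {0})))) :
    ∃ S : Finset (ℕ × Lex (Fin d → ℤ)),
      (S : Set (ℕ × Lex (Fin d → ℤ))) ⊆ valSemigroup ν V ∧
      ∀ x ∈ valSemigroup ν V, x ∈ AddSubmonoid.closure (S : Set (ℕ × Lex (Fin d → ℤ))) :=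
  finitely_generated_of_okounkov_body_eq_convexHull_general ν V hVfd hadd hmul htriv hΔ.subset
end

section
/- Let S be a finite subset of ℤ × ℤ^d. Then there exists an additive (ℤ-linear) map π : ℤ × ℤ^d → ℤ such that π(m,u) < π(n,v) whenever (m,u) and (n,v) lie in S and (m,u) < (n,v) in the modified order. -/
/-- The strict modified order on `ℤ × ℤ^d`: `(m,u) < (n,v)` iff `m < n`, or `m = n` and
`u > v` lexicographically. -/
def ModLT {d : ℕ} (a b : ℤ × Lex (Fin d → ℤ)) : Prop :=
  a.1 < b.1 ∨ (a.1 = b.1 ∧ b.2 < a.2)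

/-!
If `f` and `g` are two functionals, then on a finite set a large multiple of `f` plus `g` respects
the lexicographic comparison of the pairs `(f, g)`: a strict inequality between values of `f`,
once multiplied by a large integer, outweighs every difference of values of `g`. Iterating from
the least significant coordinate upwards handles lexicographically ordered families; on a finite
set only finitely many coordinates decide comparisons.
-/

open Filter

variable {ι A M : Type*} [AddCommGroup A] [LinearOrder A] [IsOrderedAddMonoid A] [Archimedean A]

theorem eventually_nsmul_add_lt_of_lex {α : Type*} (S : Finset α) (f g : α → A) :
    ∀ᶠ n : ℕ in atTop, ∀ a ∈ S, ∀ b ∈ S,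
      f a < f b ∨ f a = f b ∧ g a < g b → n • f a + g a < n • f b + g b := by
  simp only [eventually_all_finset, eventually_imp_distrib_left]
  rintro a - b - (hf | ⟨hf, hg⟩)
  · have : Nontrivial A := nontrivial_of_lt _ _ hf
    have hlarge : ∀ᶠ n : ℕ in atTop, g a - g b < n • (f b - f a) :=
      (tendsto_id.atTop_nsmul_const (sub_pos.2 hf)).eventually_gt_atTop _
    filter_upwards [hlarge] with n hn
    rwa [smul_sub, sub_lt_sub_iff, add_comm] at hn
  · simpa only [hf, add_lt_add_iff_left] using Eventually.of_forall fun _ => hg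

theorem exists_finset_deciding_pi_lex [LT ι] {β : ι → Type*} [∀ i, LT (β i)]
    (S : Finset (∀ i, β i)) :
    ∃ s : Finset ι, ∀ a ∈ S, ∀ b ∈ S, toLex a < toLex b →
      ∃ i ∈ s, (∀ j < i, a j = b j) ∧ a i < b i := by
  suffices h : ∀ᶠ s : Finset ι in atTop, ∀ a ∈ S, ∀ b ∈ S, toLex a < toLex b →
      ∃ i ∈ s, (∀ j < i, a j = b j) ∧ a i < b i from h.exists
  simp only [eventually_all_finset, eventually_imp_distrib_left]
  rintro a - b - ⟨i, hagree, hlt⟩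
  filter_upwards [eventually_ge_atTop {i}] with s hs
  exact ⟨i, Finset.singleton_subset_iff.1 hs, hagree, hlt⟩

theorem exists_addMonoidHom_lt_of_lex_on_finset [LinearOrder ι] [AddZeroClass M]
    (S : Finset M) (f : ι → M →+ A) (s : Finset ι) :
    ∃ h : M →+ A, ∀ a ∈ S, ∀ b ∈ S,
      (∃ i ∈ s, (∀ j ∈ s, j < i → f j a = f j b) ∧ f i a < f i b) → h a < h b := by
  induction s using Finset.induction_on_min with
  | empty => exact ⟨0, by simp⟩
  | insert k s hk ih =>
    obtain ⟨h, hh⟩ := ih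
    obtain ⟨n, hn⟩ := (eventually_nsmul_add_lt_of_lex S (f k) h).exists
    refine ⟨n • f k + h, fun a ha b hb ⟨i, hi, hagree, hlt⟩ => hn a ha b hb ?_⟩
    obtain rfl | his := Finset.mem_insert.1 hi
    · exact .inl hlt
    · exact .inr ⟨hagree k (Finset.mem_insert_self k s) (hk i his),
        hh a ha b hb ⟨i, his, fun j hj => hagree j (Finset.mem_insert_of_mem hj), hlt⟩⟩

theorem exists_addMonoidHom_lt_of_pi_lex [LinearOrder ι] [AddZeroClass M]
    (S : Finset M) (f : ι → M →+ A) :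
    ∃ h : M →+ A, ∀ a ∈ S, ∀ b ∈ S,
      toLex (fun i => f i a) < toLex (fun i => f i b) → h a < h b := by
  classical
  obtain ⟨s, hs⟩ := exists_finset_deciding_pi_lex (S.image fun a i => f i a)
  obtain ⟨h, hh⟩ := exists_addMonoidHom_lt_of_lex_on_finset S f s
  refine ⟨h, fun a ha b hb hab => hh a ha b hb ?_⟩
  obtain ⟨i, hi, hagree, hlt⟩ :=
    hs _ (Finset.mem_image_of_mem _ ha) _ (Finset.mem_image_of_mem _ hb) hab
  exact ⟨i, hi, fun j _ => hagree j, hlt⟩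

theorem exists_linear_projection_respecting_order_general [LinearOrder ι]
    (S : Finset (A × Lex (ι → A))) :
    ∃ π : (A × Lex (ι → A)) →+ A,
      ∀ a ∈ S, ∀ b ∈ S, a.1 < b.1 ∨ (a.1 = b.1 ∧ b.2 < a.2) → π a < π b := by
  let coordinate (i : ι) : A × Lex (ι → A) →+ A :=
    (Pi.evalAddMonoidHom (fun _ => A) i).comp
      ((ofLexAddEquiv (ι → A)).toAddMonoidHom.comp (AddMonoidHom.snd A (Lex (ι → A))))
  obtain ⟨r, hr⟩ := exists_addMonoidHom_lt_of_pi_lex S coordinate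
  obtain ⟨n, hn⟩ := (eventually_nsmul_add_lt_of_lex S Prod.fst (fun a => -r a)).exists
  exact ⟨n • AddMonoidHom.fst A (Lex (ι → A)) + -r, fun a ha b hb hab =>
    hn a ha b hb (hab.imp_right (And.imp_right fun h => neg_lt_neg (hr b hb a ha h)))⟩

theorem exists_linear_projection_respecting_order
    {d : ℕ} (S : Finset (ℤ × Lex (Fin d → ℤ))) :
    ∃ π : (ℤ × Lex (Fin d → ℤ)) →+ ℤ,
      ∀ a ∈ S, ∀ b ∈ S, ModLT a b → π a < π b :=
  exists_linear_projection_respecting_order_general S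
end

section
/- Suppose ν is a ℤ^d-valuation on K trivial on k. Then for every (m,u) ∈ ℕ×ℤ^d, the set Γ_{≤(m,u)} = {(m',u') ∈ Γ : (m',u') ≤ (m,u) in the modified order} is finite. -/
/-- The modified order on `ℕ × ℤ^d`: `(m,u) ≤ (m',u')` iff `m < m'`, or `m = m'` and
`u ≥ u'` lexicographically. -/
def ModLE {d : ℕ} (a b : ℕ × Lex (Fin d → ℤ)) : Prop :=
  a.1 < b.1 ∨ (a.1 = b.1 ∧ b.2 ≤ a.2)

/-!
On a module of finite length a valuation takes only finitely many values: the submodules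
`{f | u ≤ ν f}` strictly decrease as `u` runs through the values of `ν`. Each `V ^ n` has finite
length, and an element of the valuation semigroup below `(m, u)` has degree at most `m`.
-/

/-- A prevaluation on an `R`-module: a map that is superadditive in the ultrametric sense and does
not decrease under scalar multiplication. Over a field the second condition says that nonzero
scalars preserve `ν`. The value at `0`, conventionally `∞`, is left unconstrained. -/
structure IsPrevaluation (R : Type*) {M Γ : Type*} [Semiring R] [AddCommMonoid M] [Module R M]
    [LinearOrder Γ] (ν : M → Γ) : Prop where
  min_le_map_add : ∀ f g : M, f ≠ 0 → g ≠ 0 → f + g ≠ 0 → min (ν f) (ν g) ≤ ν (f + g)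
  le_map_smul : ∀ (c : R) (f : M), c • f ≠ 0 → ν f ≤ ν (c • f)

namespace IsPrevaluation

section Module

variable {R M N Γ : Type*} [Semiring R] [AddCommMonoid M] [Module R M] [AddCommMonoid N]
  [Module R N] [LinearOrder Γ] {ν : M → Γ}

theorem comp_of_injective (hν : IsPrevaluation R ν) {φ : N →ₗ[R] M}
    (hφ : Function.Injective φ) : IsPrevaluation R (ν ∘ φ) where
  min_le_map_add f g hf hg hfg := by
    rw [← map_ne_zero_iff φ hφ] at hf hg hfg
    simpa only [Function.comp_apply, map_add] using
      hν.min_le_map_add (φ f) (φ g) hf hg (by rwa [← map_add])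
  le_map_smul c f hcf := by
    rw [← map_ne_zero_iff φ hφ, map_smul] at hcf
    simpa only [Function.comp_apply, map_smul] using hν.le_map_smul c (φ f) hcf

/-- The step `{f | f = 0 ∨ u ≤ ν f}` of the decreasing filtration that `ν` induces. -/
def geSubmodule (hν : IsPrevaluation R ν) (u : Γ) : Submodule R M where
  carrier := {f | f ≠ 0 → u ≤ ν f}
  zero_mem' h := absurd rfl h
  add_mem' {f g} hf hg hfg := by
    by_cases hf0 : f = 0
    · simp_all
    by_cases hg0 : g = 0
    · simp_all
    exact (le_min (hf hf0) (hg hg0)).trans (hν.min_le_map_add f g hf0 hg0 hfg)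
  smul_mem' c f hf hcf := (hf (right_ne_zero_of_smul hcf)).trans (hν.le_map_smul c f hcf)

theorem mem_geSubmodule_iff (hν : IsPrevaluation R ν) {u : Γ} {f : M} (hf : f ≠ 0) :
    f ∈ hν.geSubmodule u ↔ u ≤ ν f :=
  ⟨fun h ↦ h hf, fun h _ ↦ h⟩

theorem antitone_geSubmodule (hν : IsPrevaluation R ν) : Antitone hν.geSubmodule :=
  fun _ _ huv _ hf hf0 ↦ huv.trans (hf hf0)

theorem strictAntiOn_geSubmodule (hν : IsPrevaluation R ν) :
    StrictAntiOn hν.geSubmodule (ν '' {0}ᶜ) := by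
  rintro _ ⟨f, hf, rfl⟩ v - hlt
  refine SetLike.lt_iff_le_and_exists.mpr ⟨hν.antitone_geSubmodule hlt.le, f, ?_, ?_⟩
  · exact (hν.mem_geSubmodule_iff hf).mpr le_rfl
  · exact fun h ↦ hlt.not_ge ((hν.mem_geSubmodule_iff hf).mp h)

theorem finite_image_compl_zero [IsNoetherian R M] [IsArtinian R M] (hν : IsPrevaluation R ν) :
    (ν '' {0}ᶜ).Finite := by
  have hF : StrictAnti fun u : ν '' {0}ᶜ ↦ hν.geSubmodule u :=
    hν.strictAntiOn_geSubmodule.strictAnti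
  have := hF.wellFoundedLT
  have := hF.wellFoundedGT
  exact Finite.of_wellFoundedLT_wellFoundedGT _

theorem finite_values (hν : IsPrevaluation R ν) (W : Submodule R M) [IsNoetherian R W]
    [IsArtinian R W] : {u | ∃ f ∈ W, f ≠ 0 ∧ ν f = u}.Finite := by
  refine (hν.comp_of_injective W.injective_subtype).finite_image_compl_zero.subset ?_
  rintro _ ⟨f, hfW, hf, rfl⟩
  exact ⟨⟨f, hfW⟩, by simpa using hf, rfl⟩

end Module

theorem of_map_mul {k A Γ : Type*} [CommSemiring k] [Semiring A] [Algebra k A]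
    [AddZeroClass Γ] [LinearOrder Γ] {ν : A → Γ}
    (hadd : ∀ f g : A, f ≠ 0 → g ≠ 0 → f + g ≠ 0 → min (ν f) (ν g) ≤ ν (f + g))
    (hmul : ∀ f g : A, f ≠ 0 → g ≠ 0 → ν (f * g) = ν f + ν g)
    (htriv : ∀ c : k, c ≠ 0 → ν (algebraMap k A c) = 0) : IsPrevaluation k ν where
  min_le_map_add := hadd
  le_map_smul c f hcf := by
    have hc : c ≠ 0 := left_ne_zero_of_smul hcf
    have hf : f ≠ 0 := right_ne_zero_of_smul hcf
    rw [Algebra.smul_def] at hcf ⊢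
    rw [hmul _ _ (left_ne_zero_of_mul hcf) hf, htriv c hc, zero_add]

end IsPrevaluation

theorem valSemigroup_finite_below_general {R A Γ : Type*} [CommRing R] [IsArtinianRing R] [Ring A]
    [Algebra R A] [LinearOrder Γ] {ν : A → Γ} (hν : IsPrevaluation R ν) {V : Submodule R A}
    (hV : V.FG) (m : ℕ) :
    {p : ℕ × Γ | (∃ g ∈ V ^ p.1, g ≠ 0 ∧ ν g = p.2) ∧ p.1 ≤ m}.Finite := by
  have hfin (n : ℕ) : {u | ∃ g ∈ V ^ n, g ≠ 0 ∧ ν g = u}.Finite := by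
    have : Module.Finite R ↥(V ^ n) := Module.Finite.iff_fg.mpr (hV.pow n)
    exact hν.finite_values (V ^ n)
  refine ((Set.finite_Iic m).biUnion fun n _ ↦ (hfin n).image (Prod.mk n)).subset ?_
  rintro ⟨n, u⟩ ⟨hu, hn⟩
  exact Set.mem_biUnion hn ⟨u, hu, rfl⟩

theorem ModLE.fst_le {d : ℕ} {a b : ℕ × Lex (Fin d → ℤ)} (h : ModLE a b) : a.1 ≤ b.1 :=
  h.elim le_of_lt fun h ↦ h.1.le

theorem valSemigroup_finite_below
    {k K : Type*} [Field k] [Field K] [Algebra k K] {d : ℕ}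
    (ν : K → Lex (Fin d → ℤ)) (V : Submodule k K)
    (hVne : V ≠ ⊥) (hVfd : FiniteDimensional k ↥V)
    (hadd : ∀ f g : K, f ≠ 0 → g ≠ 0 → f + g ≠ 0 → min (ν f) (ν g) ≤ ν (f + g))
    (hmul : ∀ f g : K, f ≠ 0 → g ≠ 0 → ν (f * g) = ν f + ν g)
    (htriv : ∀ c : k, c ≠ 0 → ν (algebraMap k K c) = 0) :
    ∀ (m : ℕ) (u : Lex (Fin d → ℤ)),
      {p ∈ valSemigroup ν V | ModLE p (m, u)}.Finite := fun m _ ↦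
  (valSemigroup_finite_below_general (.of_map_mul hadd hmul htriv)
    (Module.Finite.iff_fg.mp hVfd) m).subset fun _ hp ↦ ⟨hp.1, hp.2.fst_le⟩
end

section
/- Let k be a field, and define ν : k[x,y]∖{0} → ℤ×ℤ by ν(f) = the lexicographically smallest pair (i,j) such that the coefficient of x^i y^j in f is nonzero (this is the valuation attached to the flag {x=0} ⊃ {(0,0)}). Let V ⊆ k[x,y] be the k-linear span of {1, x, y + x·y³, x·y}, and let V·V ⊆ k[x,y] be the k-span of all products of two elements of V. Then: (a) ν(f) ∈ {(0,0), (1,0), (0,1), (1,1)} for every f ∈ V∖{0}; (b) x²y³ ∈ V·V and ν(x²y³) = (2,3); and (c) (2,3) is not the sum of two elements of {(0,0), (1,0), (0,1), (1,1)}. In particular, ν(V·V∖{0}) strictly contains ν(V∖{0}) + ν(V∖{0}). -/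
open MvPolynomial Pointwise

/-- The lexicographic order on `ℤ × ℤ`. -/
def zlexLe (a b : ℤ × ℤ) : Prop :=
  a.1 < b.1 ∨ (a.1 = b.1 ∧ a.2 ≤ b.2)

/-- The coefficient of `x^i y^j` in a polynomial in `k[x,y]`. -/
noncomputable def coeffXY {k : Type*} [Field k] (i j : ℕ) (f : MvPolynomial (Fin 2) k) : k :=
  MvPolynomial.coeff (Finsupp.single (0 : Fin 2) i + Finsupp.single (1 : Fin 2) j) f

/-
With respect to the lexicographic minimum of the exponents, the four generators of `V` have pairwise
distinct values, and distinct values prevent cancellation of lowest terms, so no other value occurs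
on `V ∖ {0}`. In `V * V`, however, `x * (y + x * y ^ 3)` and `1 * (x * y)` share the lowest term
`x * y`, and their difference `x ^ 2 * y ^ 3` has the new value `(2, 3)`.
-/

open MvPowerSeries (lexOrder)

section LexOrder

variable {σ R : Type*} [LinearOrder σ] [WellFoundedGT σ] [Semiring R]

lemma lexOrder_monomial (m : σ →₀ ℕ) {a : R} (ha : a ≠ 0) :
    lexOrder (MvPowerSeries.monomial m a) = toLex m := by
  classical
  refine le_antisymm (MvPowerSeries.lexOrder_le_of_coeff_ne_zero ?_)
    (MvPowerSeries.le_lexOrder_iff.2 fun d hd ↦ ?_)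
  · rwa [MvPowerSeries.coeff_monomial_same]
  · exact MvPowerSeries.coeff_monomial_ne (by rintro rfl; exact lt_irrefl _ hd) a

lemma lexOrder_smul [NoZeroDivisors R] {c : R} (hc : c ≠ 0) (φ : MvPowerSeries σ R) :
    lexOrder (c • φ) = lexOrder φ := by
  rw [MvPowerSeries.smul_eq_C_mul, MvPowerSeries.lexOrder_mul,
    ← MvPowerSeries.monomial_zero_eq_C_apply, lexOrder_monomial 0 hc, toLex_zero,
    WithTop.coe_zero, zero_add]

lemma lexOrder_add_of_lt {φ ψ : MvPowerSeries σ R} (h : lexOrder φ < lexOrder ψ) :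
    lexOrder (φ + ψ) = lexOrder φ := by
  obtain ⟨m, hm⟩ := WithTop.ne_top_iff_exists.1 h.ne_top
  have hφ : MvPowerSeries.coeff (ofLex m) φ ≠ 0 := MvPowerSeries.coeff_ne_zero_of_lexOrder hm
  have hψ : MvPowerSeries.coeff (ofLex m) ψ = 0 :=
    MvPowerSeries.coeff_eq_zero_of_lt_lexOrder (hm.trans_lt h)
  refine le_antisymm ?_ ((min_eq_left h.le).ge.trans MvPowerSeries.min_lexOrder_le)
  rw [← hm]
  exact MvPowerSeries.lexOrder_le_of_coeff_ne_zero (d := ofLex m) (by rwa [map_add, hψ, add_zero])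

lemma lexOrder_add_of_ne {φ ψ : MvPowerSeries σ R} (h : lexOrder φ ≠ lexOrder ψ) :
    lexOrder (φ + ψ) = min (lexOrder φ) (lexOrder ψ) := by
  rcases h.lt_or_gt with hlt | hgt
  · rw [lexOrder_add_of_lt hlt, min_eq_left hlt.le]
  · rw [add_comm, lexOrder_add_of_lt hgt, min_eq_right hgt.le]

lemma lexOrder_sum_mem_image {ι : Type*} {t : Finset ι} {φ : ι → MvPowerSeries σ R}
    (hinj : Set.InjOn (fun i ↦ lexOrder (φ i)) t) (hne : ∑ i ∈ t, φ i ≠ 0) :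
    lexOrder (∑ i ∈ t, φ i) ∈ (fun i ↦ lexOrder (φ i)) '' t := by
  classical
  induction t using Finset.induction_on with
  | empty => simp at hne
  | insert j t hj ih =>
    rw [Finset.sum_insert hj] at hne ⊢
    rw [Finset.coe_insert] at hinj ⊢
    obtain hzero | hnonzero := eq_or_ne (∑ i ∈ t, φ i) 0
    · exact ⟨j, Set.mem_insert j _, by simp only [hzero, add_zero]⟩
    obtain ⟨i, hi, hsum⟩ := ih (hinj.mono (Set.subset_insert j _)) hnonzero
    have hdistinct : lexOrder (φ j) ≠ lexOrder (φ i) := fun h ↦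
      hj (hinj (Set.mem_insert j _) (Set.mem_insert_of_mem j hi) h ▸ hi)
    rw [lexOrder_add_of_ne (hsum ▸ hdistinct), ← hsum]
    rcases min_choice (lexOrder (φ j)) (lexOrder (φ i)) with h | h
    · exact ⟨j, Set.mem_insert j _, h.symm⟩
    · exact ⟨i, Set.mem_insert_of_mem j hi, h.symm⟩

lemma lexOrder_mem_image_of_mem_span [NoZeroDivisors R] {s : Set (MvPowerSeries σ R)}
    (hs : Set.InjOn lexOrder s) {φ : MvPowerSeries σ R} (hφ : φ ∈ Submodule.span R s)
    (hne : φ ≠ 0) : lexOrder φ ∈ lexOrder '' s := by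
  obtain ⟨c, hcs, rfl⟩ := Submodule.mem_span_set.1 hφ
  have hsmul : ∀ ψ ∈ c.support, lexOrder (c ψ • ψ) = lexOrder ψ := fun ψ hψ ↦
    lexOrder_smul (Finsupp.mem_support_iff.1 hψ) ψ
  have hinj : Set.InjOn (fun ψ ↦ lexOrder (c ψ • ψ)) c.support :=
    (hs.mono hcs).congr fun ψ hψ ↦ (hsmul ψ hψ).symm
  obtain ⟨ψ, hψ, hsum⟩ := lexOrder_sum_mem_image hinj hne
  exact ⟨ψ, hcs hψ, (hsmul ψ hψ).symm.trans hsum⟩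

end LexOrder

lemma image_add_image_subset_image_mul {R A Γ : Type*} [CommSemiring R] [Semiring A]
    [NoZeroDivisors A] [Algebra R A] [Add Γ] {ν : A → Γ}
    (hmul : ∀ f g : A, f ≠ 0 → g ≠ 0 → ν (f * g) = ν f + ν g) (V W : Submodule R A) :
    ν '' ((V : Set A) \ {0}) + ν '' ((W : Set A) \ {0}) ⊆
      ν '' (((V * W : Submodule R A) : Set A) \ {0}) := by
  rintro _ ⟨_, ⟨f, ⟨hf, hf0⟩, rfl⟩, _, ⟨g, ⟨hg, hg0⟩, rfl⟩, rfl⟩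
  exact ⟨f * g, ⟨Submodule.mul_mem_mul hf hg, mul_ne_zero hf0 hg0⟩, hmul f g hf0 hg0⟩

/-- `ν` is the valuation of the flag `{x = 0} ⊃ {(0, 0)}`: it sends a nonzero polynomial to the
exponent pair of its lexicographically smallest monomial, which is the `lexOrder` of the
polynomial regarded as a power series. The value `ν 0` is left unconstrained. -/
def IsLexValuation {R : Type*} [CommSemiring R] (ν : MvPolynomial (Fin 2) R → ℤ × ℤ) : Prop :=
  ∀ (f : MvPolynomial (Fin 2) R) (m : Fin 2 →₀ ℕ),
    lexOrder (f : MvPowerSeries (Fin 2) R) = toLex m → ν f = ((m 0 : ℤ), (m 1 : ℤ))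

lemma single_zero_add_single_one (m : Fin 2 →₀ ℕ) :
    Finsupp.single 0 (m 0) + Finsupp.single 1 (m 1) = m := by
  rw [← Fin.sum_univ_two fun i ↦ Finsupp.single i (m i), Finsupp.univ_sum_single]

lemma zlexLe_of_toLex_le {m n : Fin 2 →₀ ℕ} (h : toLex m ≤ toLex n) :
    zlexLe ((m 0 : ℤ), (m 1 : ℤ)) ((n 0 : ℤ), (n 1 : ℤ)) := by
  rcases h.eq_or_lt with heq | hlt
  · obtain rfl := toLex.injective heq
    exact Or.inr ⟨rfl, le_rfl⟩
  · obtain ⟨i, heq, hi⟩ := Finsupp.Lex.lt_iff.1 hlt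
    fin_cases i
    · exact Or.inl (Int.ofNat_lt.2 hi)
    · exact Or.inr ⟨congrArg Nat.cast (heq 0 Fin.zero_lt_one), Int.ofNat_le.2 hi.le⟩

lemma zlexLe_antisymm {a b : ℤ × ℤ} (hab : zlexLe a b) (hba : zlexLe b a) : a = b := by
  simp only [zlexLe] at hab hba
  ext <;> omega

lemma isLexValuation_of_coeffXY {k : Type*} [Field k] {ν : MvPolynomial (Fin 2) k → ℤ × ℤ}
    (hν : ∀ f : MvPolynomial (Fin 2) k, f ≠ 0 →
      (∃ i j : ℕ, ν f = ((i : ℤ), (j : ℤ)) ∧ coeffXY i j f ≠ 0) ∧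
      (∀ i j : ℕ, coeffXY i j f ≠ 0 → zlexLe (ν f) ((i : ℤ), (j : ℤ)))) :
    IsLexValuation ν := by
  intro f m hm
  have hcoeff : coeffXY (m 0) (m 1) f ≠ 0 := by
    rw [coeffXY, single_zero_add_single_one, ← coeff_coe]
    exact MvPowerSeries.coeff_ne_zero_of_lexOrder hm.symm
  have hf : f ≠ 0 := by
    rintro rfl
    exact hcoeff (coeff_zero _)
  obtain ⟨⟨i, j, hij, hij_coeff⟩, hmin⟩ := hν f hf
  refine zlexLe_antisymm (hmin _ _ hcoeff) ?_
  have hle : toLex m ≤ toLex (Finsupp.single 0 i + Finsupp.single 1 j) := by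
    rw [← WithTop.coe_le_coe, ← hm]
    exact MvPowerSeries.lexOrder_le_of_coeff_ne_zero (by rwa [coeff_coe])
  simpa [hij] using zlexLe_of_toLex_le hle

namespace IsLexValuation

variable {R : Type*} [CommSemiring R] {ν : MvPolynomial (Fin 2) R → ℤ × ℤ}

lemma map_monomial (hν : IsLexValuation ν) (m : Fin 2 →₀ ℕ) {a : R} (ha : a ≠ 0) :
    ν (monomial m a) = ((m 0 : ℤ), (m 1 : ℤ)) :=
  hν _ _ (by rw [coe_monomial, lexOrder_monomial m ha])

lemma map_add_of_lt (hν : IsLexValuation ν) {f g : MvPolynomial (Fin 2) R}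
    (h : lexOrder (f : MvPowerSeries (Fin 2) R) < lexOrder (g : MvPowerSeries (Fin 2) R)) :
    ν (f + g) = ν f := by
  obtain ⟨m, hm⟩ := WithTop.ne_top_iff_exists.1 h.ne_top
  rw [hν f (ofLex m) hm.symm]
  exact hν _ _ (by rw [coe_add, lexOrder_add_of_lt h, ← hm, toLex_ofLex])

lemma map_mul [NoZeroDivisors R] (hν : IsLexValuation ν) {f g : MvPolynomial (Fin 2) R}
    (hf : f ≠ 0) (hg : g ≠ 0) : ν (f * g) = ν f + ν g := by
  obtain ⟨m, hm⟩ := MvPowerSeries.exists_finsupp_eq_lexOrder_of_ne_zero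
    (coe_eq_zero_iff.not.2 hf)
  obtain ⟨n, hn⟩ := MvPowerSeries.exists_finsupp_eq_lexOrder_of_ne_zero
    (coe_eq_zero_iff.not.2 hg)
  have hmn : lexOrder ((f * g : MvPolynomial (Fin 2) R) : MvPowerSeries (Fin 2) R) =
      toLex (m + n) := by
    rw [coe_mul, MvPowerSeries.lexOrder_mul, hm, hn, toLex_add, WithTop.coe_add]
  simp [hν f m hm, hν g n hn, hν _ _ hmn]

lemma map_eq_of_lexOrder_eq (hν : IsLexValuation ν) {f g : MvPolynomial (Fin 2) R} (hf : f ≠ 0)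
    (h : lexOrder (f : MvPowerSeries (Fin 2) R) = lexOrder (g : MvPowerSeries (Fin 2) R)) :
    ν f = ν g := by
  obtain ⟨m, hm⟩ := MvPowerSeries.exists_finsupp_eq_lexOrder_of_ne_zero
    (coe_eq_zero_iff.not.2 hf)
  rw [hν f m hm, hν g m (h.symm.trans hm)]

lemma map_mem_image_of_mem_span [NoZeroDivisors R] (hν : IsLexValuation ν)
    {s : Set (MvPolynomial (Fin 2) R)} (hs : Set.InjOn ν s) (hs0 : 0 ∉ s)
    {f : MvPolynomial (Fin 2) R} (hf : f ∈ Submodule.span R s) (hf0 : f ≠ 0) : ν f ∈ ν '' s := by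
  let ι := (coeToMvPowerSeries.algHom (σ := Fin 2) (R := R) R).toLinearMap
  have hinj : Set.InjOn lexOrder (ι '' s) := by
    rintro _ ⟨g, hg, rfl⟩ _ ⟨h, hh, rfl⟩ heq
    exact congrArg ι (hs hg hh (hν.map_eq_of_lexOrder_eq (ne_of_mem_of_not_mem hg hs0) heq))
  have hspan : ι f ∈ Submodule.span R (ι '' s) := by
    rw [Submodule.span_image]
    exact Submodule.mem_map_of_mem hf
  obtain ⟨_, ⟨g, hg, rfl⟩, hgf⟩ :=
    lexOrder_mem_image_of_mem_span hinj hspan (coe_eq_zero_iff.not.2 hf0)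
  exact ⟨g, hg, hν.map_eq_of_lexOrder_eq (ne_of_mem_of_not_mem hg hs0) hgf⟩

lemma map_X_pow_mul_X_pow [Nontrivial R] (hν : IsLexValuation ν) (i j : ℕ) :
    ν (X 0 ^ i * X 1 ^ j) = ((i : ℤ), (j : ℤ)) := by
  rw [X_pow_eq_monomial, X_pow_eq_monomial, monomial_mul, mul_one, hν.map_monomial _ one_ne_zero]
  simp

lemma map_X_one_add_X_zero_mul [Nontrivial R] (hν : IsLexValuation ν)
    (g : MvPolynomial (Fin 2) R) : ν (X 1 + X 0 * g) = (0, 1) := by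
  have hX (i : Fin 2) : lexOrder (MvPowerSeries.X i : MvPowerSeries (Fin 2) R) =
      toLex (Finsupp.single i 1) := lexOrder_monomial _ one_ne_zero
  have hlt : lexOrder ((X 1 : MvPolynomial (Fin 2) R) : MvPowerSeries (Fin 2) R) <
      lexOrder ((X 0 * g : MvPolynomial (Fin 2) R) : MvPowerSeries (Fin 2) R) := by
    rw [coe_mul, coe_X, coe_X]
    calc lexOrder (MvPowerSeries.X 1 : MvPowerSeries (Fin 2) R)
        < lexOrder (MvPowerSeries.X 0 : MvPowerSeries (Fin 2) R) := by
          rw [hX, hX, WithTop.coe_lt_coe]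
          exact Finsupp.Lex.single_strictAnti Fin.zero_lt_one
      _ ≤ lexOrder (MvPowerSeries.X 0) + lexOrder (g : MvPowerSeries (Fin 2) R) :=
          le_add_of_nonneg_right bot_le
      _ ≤ lexOrder (MvPowerSeries.X 0 * (g : MvPowerSeries (Fin 2) R)) :=
          MvPowerSeries.le_lexOrder_mul _ _
  rw [hν.map_add_of_lt hlt]
  simpa using hν.map_X_pow_mul_X_pow 0 1

end IsLexValuation

/-- The four polynomials `1`, `x`, `y + x * y ^ 3`, `x * y` spanning the space `V` of the
counterexample. -/
def exampleGenerators (R : Type*) [CommSemiring R] : Set (MvPolynomial (Fin 2) R) :=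
  {1, X 0, X 1 + X 0 * X 1 ^ 3, X 0 * X 1}

/-- The space `V` of the counterexample. -/
noncomputable def exampleSpace (R : Type*) [CommSemiring R] :
    Submodule R (MvPolynomial (Fin 2) R) :=
  Submodule.span R (exampleGenerators R)

/-- The vertices of the unit square, which are the values on `V ∖ {0}` of the valuation. -/
def unitSquareVertices : Set (ℤ × ℤ) := {(0, 0), (1, 0), (0, 1), (1, 1)}

lemma add_ne_of_mem_unitSquareVertices :
    ∀ a ∈ unitSquareVertices, ∀ b ∈ unitSquareVertices, a + b ≠ (2, 3) := by
  have hsnd : ∀ a ∈ unitSquareVertices, a.2 ≤ 1 := by simp [unitSquareVertices]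
  intro a ha b hb hab
  have : a.2 + b.2 = 3 := congrArg Prod.snd hab
  linarith [hsnd a ha, hsnd b hb]

lemma X_sq_mul_X_cube_mem_exampleSpace_mul_self (R : Type*) [CommRing R] :
    (X 0 : MvPolynomial (Fin 2) R) ^ 2 * X 1 ^ 3 ∈ exampleSpace R * exampleSpace R := by
  have hgen {f : MvPolynomial (Fin 2) R} (hf : f ∈ exampleGenerators R) : f ∈ exampleSpace R :=
    Submodule.subset_span hf
  have heq : (X 0 : MvPolynomial (Fin 2) R) ^ 2 * X 1 ^ 3 =
      X 0 * (X 1 + X 0 * X 1 ^ 3) - 1 * (X 0 * X 1) := by ring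
  rw [heq]
  refine sub_mem (Submodule.mul_mem_mul (hgen ?_) (hgen ?_))
    (Submodule.mul_mem_mul (hgen ?_) (hgen ?_)) <;> simp [exampleGenerators]

namespace IsLexValuation

variable {R : Type*} [CommSemiring R] [Nontrivial R] {ν : MvPolynomial (Fin 2) R → ℤ × ℤ}

lemma map_exampleGenerators (hν : IsLexValuation ν) :
    ν 1 = (0, 0) ∧ ν (X 0) = (1, 0) ∧ ν (X 1 + X 0 * X 1 ^ 3) = (0, 1) ∧ ν (X 0 * X 1) = (1, 1) :=
  ⟨by simpa using hν.map_X_pow_mul_X_pow 0 0, by simpa using hν.map_X_pow_mul_X_pow 1 0,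
    hν.map_X_one_add_X_zero_mul _, by simpa using hν.map_X_pow_mul_X_pow 1 1⟩

lemma image_exampleGenerators (hν : IsLexValuation ν) :
    ν '' exampleGenerators R = unitSquareVertices := by
  obtain ⟨h_one, h_x, h_y, h_xy⟩ := hν.map_exampleGenerators
  simp only [exampleGenerators, unitSquareVertices, Set.image_insert_eq, Set.image_singleton,
    h_one, h_x, h_y, h_xy]

lemma injOn_exampleGenerators (hν : IsLexValuation ν) : Set.InjOn ν (exampleGenerators R) := by
  obtain ⟨h_one, h_x, h_y, h_xy⟩ := hν.map_exampleGenerators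
  rintro f (rfl | rfl | rfl | rfl) g (rfl | rfl | rfl | rfl) heq <;>
    first
    | rfl
    | simp [h_one, h_x, h_y, h_xy] at heq

end IsLexValuation

lemma zero_notMem_exampleGenerators (R : Type*) [CommSemiring R] [Nontrivial R] :
    0 ∉ exampleGenerators R := by
  have hne {f : MvPolynomial (Fin 2) R} (a b : R) (hf : eval ![a, b] f = 1) : 0 ≠ f := by
    rintro rfl
    simp at hf
  rintro (h | h | h | h)
  · exact hne 0 0 (by simp) h
  · exact hne 1 0 (by simp) h
  · exact hne 0 1 (by simp) h
  · exact hne 1 1 (by simp) h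

theorem counterexample_valuation_image_of_square_general {R : Type*} [CommRing R] [IsDomain R]
    {ν : MvPolynomial (Fin 2) R → ℤ × ℤ} (hν : IsLexValuation ν) :
    (∀ f ∈ exampleSpace R, f ≠ 0 → ν f ∈ unitSquareVertices) ∧
    ((X 0 : MvPolynomial (Fin 2) R) ^ 2 * X 1 ^ 3 ∈ exampleSpace R * exampleSpace R ∧
      ν (X 0 ^ 2 * X 1 ^ 3) = (2, 3)) ∧
    (∀ a ∈ unitSquareVertices, ∀ b ∈ unitSquareVertices, a + b ≠ (2, 3)) ∧
    (ν '' ((exampleSpace R : Set (MvPolynomial (Fin 2) R)) \ {0}) +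
        ν '' ((exampleSpace R : Set (MvPolynomial (Fin 2) R)) \ {0}) ⊂
      ν '' ((exampleSpace R * exampleSpace R : Submodule R (MvPolynomial (Fin 2) R)) \ {0})) := by
  have hvalues : ∀ f ∈ exampleSpace R, f ≠ 0 → ν f ∈ unitSquareVertices := fun f hf hf0 ↦
    hν.image_exampleGenerators ▸ hν.map_mem_image_of_mem_span hν.injOn_exampleGenerators
      (zero_notMem_exampleGenerators R) hf hf0
  have hmem := X_sq_mul_X_cube_mem_exampleSpace_mul_self R
  have hval : ν (X 0 ^ 2 * X 1 ^ 3) = (2, 3) := hν.map_X_pow_mul_X_pow 2 3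
  have hne : (X 0 : MvPolynomial (Fin 2) R) ^ 2 * X 1 ^ 3 ≠ 0 :=
    mul_ne_zero (pow_ne_zero 2 (X_ne_zero 0)) (pow_ne_zero 3 (X_ne_zero 1))
  refine ⟨hvalues, ⟨hmem, hval⟩, add_ne_of_mem_unitSquareVertices, ?_⟩
  refine Set.ssubset_iff_exists.2
    ⟨image_add_image_subset_image_mul (fun _ _ ↦ hν.map_mul) _ _, (2, 3),
      ⟨_, ⟨hmem, hne⟩, hval⟩, ?_⟩
  rintro ⟨_, ⟨f, ⟨hf, hf0⟩, rfl⟩, _, ⟨g, ⟨hg, hg0⟩, rfl⟩, hsum⟩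
  exact add_ne_of_mem_unitSquareVertices _ (hvalues f hf hf0) _ (hvalues g hg hg0) hsum

theorem counterexample_valuation_image_of_square
    {k : Type*} [Field k]
    (ν : MvPolynomial (Fin 2) k → ℤ × ℤ)
    -- ν f is the lexicographically smallest (i,j) such that the coefficient of x^i y^j
    -- in f is nonzero
    (hν : ∀ f : MvPolynomial (Fin 2) k, f ≠ 0 →
      (∃ i j : ℕ, ν f = ((i : ℤ), (j : ℤ)) ∧ coeffXY i j f ≠ 0) ∧
      (∀ i j : ℕ, coeffXY i j f ≠ 0 → zlexLe (ν f) ((i : ℤ), (j : ℤ))))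
    (V : Submodule k (MvPolynomial (Fin 2) k))
    (hV : V = Submodule.span k
      ({1, X 0, X 1 + X 0 * (X 1) ^ 3, X 0 * X 1} : Set (MvPolynomial (Fin 2) k))) :
    -- (a)
    (∀ f ∈ V, f ≠ 0 → ν f ∈ ({(0, 0), (1, 0), (0, 1), (1, 1)} : Set (ℤ × ℤ))) ∧
    -- (b)
    ((X 0 : MvPolynomial (Fin 2) k) ^ 2 * (X 1) ^ 3 ∈ V * V ∧
      ν ((X 0 : MvPolynomial (Fin 2) k) ^ 2 * (X 1) ^ 3) = (2, 3)) ∧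
    -- (c)
    (∀ a ∈ ({(0, 0), (1, 0), (0, 1), (1, 1)} : Set (ℤ × ℤ)),
      ∀ b ∈ ({(0, 0), (1, 0), (0, 1), (1, 1)} : Set (ℤ × ℤ)), a + b ≠ ((2 : ℤ), (3 : ℤ))) ∧
    -- in particular: ν(V·V ∖ {0}) strictly contains ν(V∖{0}) + ν(V∖{0})
    (ν '' ((V : Set (MvPolynomial (Fin 2) k)) \ {0}) +
        ν '' ((V : Set (MvPolynomial (Fin 2) k)) \ {0}) ⊂
      ν '' (((V * V : Submodule k (MvPolynomial (Fin 2) k)) : Set (MvPolynomial (Fin 2) k)) \ {0})) := by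
  subst hV
  exact counterexample_valuation_image_of_square_general (isLexValuation_of_coeffXY hν)
end

section
/- Let Γ = {(0,0)} ∪ {(m,r) ∈ ℕ×ℕ : m ≥ 1 and r ≤ 3m−1}. Then Γ is an additive submonoid of ℕ×ℕ which is not finitely generated: no finite subset of Γ generates Γ as a monoid. In fact, for every m ≥ 1 the element (m, 3m−1) is not a sum of two nonzero elements of Γ, so every generating set of Γ must contain all the points (m, 3m−1). -/
/-!
Put `f (m, r) = 3 m - r`. Then `Γ = {0} ∪ {x | 0 < f x}`, so `f` takes integer values `≥ 1` on the
nonzero elements of `Γ`, and a sum of two of them has value `≥ 2`. The points `(m, 3 m - 1)` have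
value `1`; they are therefore irreducible in `Γ`, and there are infinitely many of them.
-/

/-- The semigroup `Γ = {(0,0)} ∪ {(m,r) : m ≥ 1, r ≤ 3m − 1} ⊆ ℕ × ℕ`. -/
def GammaEll : Set (ℕ × ℕ) :=
  {p | p = 0 ∨ (1 ≤ p.1 ∧ p.2 ≤ 3 * p.1 - 1)}

lemma coe_mem_of_addIrreducible_of_closure_eq {M : Type*} [AddCommMonoid M] {P : AddSubmonoid M}
    [Subsingleton (AddUnits P)] {S : Set M} (hS : AddSubmonoid.closure S = P) {x : P}
    (hx : AddIrreducible x) : (x : M) ∈ S := by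
  subst hS
  exact addIrreducible_subset_of_addSubmonoidClosure_eq_top
    (AddSubmonoid.closure_closure_coe_preimage (s := S)) hx

section PointedHalfspace

variable {M N : Type*} [AddCommMonoid M] [AddCommMonoid N] [Preorder N] [AddLeftStrictMono N]

/-- The open half-space `0 < f` together with the origin, as an additive submonoid. It serves as an
abstract model of `Γ`, whose points `(m, 3 m - 1)` become the points with `0 ⋖ f x`. -/
def pointedHalfspace (f : M →+ N) : AddSubmonoid M where
  carrier := {x | x = 0 ∨ 0 < f x}
  zero_mem' := Or.inl rfl
  add_mem' := by
    rintro a b (rfl | ha) (rfl | hb)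
    · exact Or.inl (add_zero 0)
    · exact Or.inr (by rwa [zero_add])
    · exact Or.inr (by rwa [add_zero])
    · exact Or.inr (by rw [map_add]; exact add_pos ha hb)

variable {f : M →+ N}

lemma map_pos_of_mem_pointedHalfspace {x : M} (hx : x ∈ pointedHalfspace f) (hx₀ : x ≠ 0) :
    0 < f x :=
  hx.resolve_left hx₀

lemma eq_zero_of_add_eq_zero_of_mem_pointedHalfspace {a b : M} (ha : a ∈ pointedHalfspace f)
    (hb : b ∈ pointedHalfspace f) (hab : a + b = 0) : a = 0 := by
  by_contra ha₀
  have hb₀ : b ≠ 0 := by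
    rintro rfl
    exact ha₀ (by rwa [add_zero] at hab)
  have hpos : 0 < f (a + b) := by
    rw [map_add]
    exact add_pos (map_pos_of_mem_pointedHalfspace ha ha₀) (map_pos_of_mem_pointedHalfspace hb hb₀)
  rw [hab, map_zero] at hpos
  exact hpos.false

instance : Subsingleton (AddUnits (pointedHalfspace f)) :=
  subsingleton_of_forall_eq 0 fun u ↦ AddUnits.ext <| Subtype.ext <|
    eq_zero_of_add_eq_zero_of_mem_pointedHalfspace (SetLike.coe_mem _) (SetLike.coe_mem _)
      (congrArg Subtype.val u.add_neg)

lemma not_zero_covBy_map_add {a b : M} (ha : a ∈ pointedHalfspace f) (hb : b ∈ pointedHalfspace f)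
    (ha₀ : a ≠ 0) (hb₀ : b ≠ 0) : ¬ 0 ⋖ f (a + b) := by
  intro h
  rw [map_add] at h
  exact h.2 (map_pos_of_mem_pointedHalfspace ha ha₀)
    (lt_add_of_pos_right _ (map_pos_of_mem_pointedHalfspace hb hb₀))

lemma addIrreducible_of_zero_covBy_map {x : pointedHalfspace f} (hx : 0 ⋖ f x) :
    AddIrreducible x := by
  simp only [addIrreducible_iff, isAddUnit_iff_eq_zero]
  refine ⟨?_, ?_⟩
  · rintro rfl
    exact hx.lt.ne (map_zero f).symm
  · rintro a b rfl
    by_contra! h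
    exact not_zero_covBy_map_add a.2 b.2 (by simpa using h.1) (by simpa using h.2) hx

lemma mem_of_zero_covBy_map_of_closure_eq {S : Set M}
    (hS : AddSubmonoid.closure S = pointedHalfspace f) {x : M} (hx : 0 ⋖ f x) : x ∈ S :=
  coe_mem_of_addIrreducible_of_closure_eq hS
    (addIrreducible_of_zero_covBy_map (x := ⟨x, Or.inr hx.lt⟩) hx)

lemma not_fg_pointedHalfspace (hf : {x | 0 ⋖ f x}.Infinite) : ¬ (pointedHalfspace f).FG := by
  rintro ⟨S, hS⟩
  exact hf (S.finite_toSet.subset fun _ ↦ mem_of_zero_covBy_map_of_closure_eq hS)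

end PointedHalfspace

/-- The functional `(m, r) ↦ 3 m - r` whose positivity defines `Γ`; it is `ℤ`-valued so that the
subtraction does not truncate. -/
def ellGap : ℕ × ℕ →+ ℤ where
  toFun p := 3 * p.1 - p.2
  map_zero' := by simp
  map_add' p q := by
    push_cast [Prod.fst_add, Prod.snd_add]
    ring

lemma ellGap_apply (p : ℕ × ℕ) : ellGap p = 3 * p.1 - p.2 := rfl

lemma coe_pointedHalfspace_ellGap : (pointedHalfspace ellGap : Set (ℕ × ℕ)) = GammaEll := by
  ext p
  refine or_congr_right ?_
  rw [ellGap_apply]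
  omega

lemma zero_covBy_ellGap {m : ℕ} (hm : 1 ≤ m) : 0 ⋖ ellGap (m, 3 * m - 1) := by
  have hgap : ellGap (m, 3 * m - 1) = 1 := by
    rw [ellGap_apply]
    omega
  rw [hgap]
  simpa using Order.covBy_add_one (0 : ℤ)

lemma infinite_zero_covBy_ellGap : {p | 0 ⋖ ellGap p}.Infinite := by
  refine Set.infinite_of_injective_forall_mem (f := fun n : ℕ ↦ (n + 1, 3 * (n + 1) - 1)) ?_
    fun n ↦ zero_covBy_ellGap n.succ_pos
  intro a b hab
  exact Nat.succ_injective (congrArg Prod.fst hab)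

theorem gammaEll_submonoid_not_finitely_generated :
    -- Γ is an additive submonoid of ℕ × ℕ
    ((0 : ℕ × ℕ) ∈ GammaEll ∧ ∀ a ∈ GammaEll, ∀ b ∈ GammaEll, a + b ∈ GammaEll) ∧
    -- Γ is not finitely generated as a monoid
    (¬ ∃ S : Finset (ℕ × ℕ), (S : Set (ℕ × ℕ)) ⊆ GammaEll ∧
        ∀ x ∈ GammaEll, x ∈ AddSubmonoid.closure (S : Set (ℕ × ℕ))) ∧
    -- for every m ≥ 1, (m, 3m−1) is not a sum of two nonzero elements of Γ
    (∀ m : ℕ, 1 ≤ m → ∀ a ∈ GammaEll, ∀ b ∈ GammaEll, a ≠ 0 → b ≠ 0 →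
        a + b ≠ (m, 3 * m - 1)) ∧
    -- hence every generating set of Γ contains all the points (m, 3m−1)
    (∀ S : Set (ℕ × ℕ), S ⊆ GammaEll →
        (∀ x ∈ GammaEll, x ∈ AddSubmonoid.closure S) →
        ∀ m : ℕ, 1 ≤ m → (m, 3 * m - 1) ∈ S) := by
  rw [← coe_pointedHalfspace_ellGap]
  refine ⟨⟨zero_mem _, fun _ ha _ hb ↦ add_mem ha hb⟩, ?_, ?_, ?_⟩
  · rintro ⟨S, hS, hgen⟩
    exact not_fg_pointedHalfspace infinite_zero_covBy_ellGap
      ⟨S, AddSubmonoid.closure_eq_of_le hS hgen⟩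
  · intro m hm a ha b hb ha₀ hb₀ hab
    exact not_zero_covBy_map_add ha hb ha₀ hb₀ (hab ▸ zero_covBy_ellGap hm)
  · intro S hS hgen m hm
    exact mem_of_zero_covBy_map_of_closure_eq (AddSubmonoid.closure_eq_of_le hS hgen)
      (zero_covBy_ellGap hm)
end
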